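/- Let J be a finite set of positive integers with n := |J| ≥ 2, and work in the polynomial ring ℤ[q_{s,t} : s,t ∈ J, s ≠ t]. Let M_J be the n!×n! matrix whose rows and columns are indexed by the bijections w : {1,…,n} → J, with (w,w') entry equal to ∏ q_{w(i),w(j)}, the product over all pairs (i,j) with 1 ≤ i < j ≤ n and w'⁻¹(w(i)) > w'⁻¹(w(j)). Then det M_J = ∏_{K ⊆ J, |K| ≥ 2} (1 − ∏_{{s,t} ⊆ K, s < t} q_{s,t} q_{t,s})^{(|K|−2)!·(n−|K|+1)!}. -/

import Mathlib

/-- The polynomial ring `ℤ[q_{s,t} : s,t ∈ J, s ≠ t]` for a finite set `J`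
of positive integers. -/
abbrev QRingJ (J : Finset ℕ+) : Type :=
  MvPolynomial {p : ℕ+ × ℕ+ // p.1 ∈ J ∧ p.2 ∈ J ∧ p.1 ≠ p.2} ℤ

/-- The variable `q_{s,t}` for `s,t ∈ J`, `s ≠ t` (junk value `0` otherwise,
which is never used). -/
noncomputable def qJ (J : Finset ℕ+) (s t : ℕ+) : QRingJ J :=
  if h : s ∈ J ∧ t ∈ J ∧ s ≠ t then MvPolynomial.X ⟨(s, t), h⟩ else 0

instance (J : Finset ℕ+) : DecidableEq (Fin J.card ≃ {x : ℕ+ // x ∈ J}) :=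
  fun e f =>
    decidable_of_iff (∀ i, e i = f i) ⟨fun h => Equiv.ext h, fun h i => by rw [h]⟩

/-!
Let `S` act on words by sending a word to the sum of its rearrangements, weighted by the factors
`q a b` of their inversions, so that `M_J` is the matrix of `S` on the words of `J`. Inserting the
first letter last, one gets `S = T (id ⊗ S)`, where `T` moves the first letter into all positions.
Restricted to the words of `J`, `id ⊗ S` is block diagonal with the operators `S` for the sets
`J \ {a}` as blocks, so it remains to find `det T`.

Let `C` be the operator that moves the first letter to the end. In `(1 - C) T` the insertions into
the last position telescope away, leaving `(1 - C) T = (T ⊗ id) (id ⊗ (1 - C'))`, where `C'` moves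
the second letter across the first one and back, and then to the end. Both `1 - C` and
`id ⊗ (1 - C')` are block diagonal with blocks `1 -` a weighted cycle, and the weights along each
cycle multiply to `X_J = ∏ q s t`, taken over all pairs of distinct letters of `J`. So the blocks
have determinant `1 - X_J`, and for generic `q` cancelling powers of `1 - X_J` expresses `det T` on
`J` by the `det T` on the sets `J \ {a}`. The general case follows by specialization.
-/

open Finset

section Determinants

variable {R : Type*} [CommRing R]

lemma det_blockDiagonal' {o : Type*} {m : o → Type*} [Fintype o] [DecidableEq o]
    [∀ a, Fintype (m a)] [∀ a, DecidableEq (m a)] (B : ∀ a, Matrix (m a) (m a) R) :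
    (Matrix.blockDiagonal' B).det = ∏ a, (B a).det := by
  let e := Fintype.equivFin o
  have htri : (Matrix.blockDiagonal' B).BlockTriangular fun x => e x.1 := by
    rintro ⟨a, u⟩ ⟨b, v⟩ h
    exact Matrix.blockDiagonal'_apply_ne _ _ _ fun hab => h.ne (congrArg e hab.symm)
  rw [htri.det_fintype, ← e.prod_comp]
  refine prod_congr rfl fun a _ => ?_
  let f : m a ≃ {x : Σ a, m a // e x.1 = e a} :=
    (Equiv.sigmaSubtype a).symm.trans (Equiv.subtypeEquivRight fun x => e.injective.eq_iff.symm)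
  rw [← Matrix.det_submatrix_equiv_self f]
  congr 1
  ext u v
  exact Matrix.blockDiagonal'_apply_eq B a u v

lemma det_eq_prod_of_sigmaEquiv {o m : Type*} {n : o → Type*} [Fintype o]
    [Fintype m] [DecidableEq m] [∀ a, Fintype (n a)] [∀ a, DecidableEq (n a)]
    (e : (Σ a, n a) ≃ m) (A : Matrix m m R) (B : ∀ a, Matrix (n a) (n a) R)
    (hdiag : ∀ a u v, A (e ⟨a, u⟩) (e ⟨a, v⟩) = B a u v)
    (hoff : ∀ a b u v, a ≠ b → A (e ⟨a, u⟩) (e ⟨b, v⟩) = 0) :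
    A.det = ∏ a, (B a).det := by
  classical
  rw [← det_blockDiagonal', ← Matrix.det_submatrix_equiv_self e A]
  congr 1
  ext ⟨a, u⟩ ⟨b, v⟩
  by_cases h : a = b
  · subst h
    rw [Matrix.blockDiagonal'_apply_eq, Matrix.submatrix_apply, hdiag]
  · rw [Matrix.blockDiagonal'_apply_ne _ _ _ h, Matrix.submatrix_apply, hoff _ _ _ _ h]

open Fin.CommRing in
lemma eq_one_or_eq_finRotate {n : ℕ} {σ : Equiv.Perm (Fin (n + 1))}
    (hσ : ∀ i, σ i = i ∨ σ i = i + 1) : σ = 1 ∨ σ = finRotate (n + 1) := by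
  by_cases hfix : ∃ i, σ i = i
  · left
    obtain ⟨i, hi⟩ := hfix
    have hback (k : ℕ) : σ (i - (k : Fin (n + 1))) = i - k := by
      induction k with
      | zero => simpa using hi
      | succ k ih =>
        have hk : i - (k + 1 : ℕ) + 1 = i - k := by push_cast; abel
        refine (hσ _).elim id fun h => ?_
        have heq : i - (k + 1 : ℕ) = i - k := σ.injective (by rw [h, hk, ih])
        rw [h, hk, heq]
    ext j
    simpa using congrArg Fin.val (hback (i - j).val)
  · right
    push Not at hfix
    ext i
    rw [(hσ i).resolve_left (hfix i), finRotate_apply]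

lemma det_one_sub_weightedCycle {n : ℕ} (c : Fin (n + 1) → R) :
    (1 - Matrix.of fun i j => if j = i + 1 then c i else 0 : Matrix _ _ R).det = 1 - ∏ i, c i := by
  obtain rfl | hn := n.eq_zero_or_pos
  · simp [Matrix.det_unique]
  have hne (i : Fin (n + 1)) : i + 1 ≠ i := by
    have : NeZero n := ⟨hn.ne'⟩
    simp
  have hrot : (1 : Equiv.Perm (Fin (n + 1))) ≠ finRotate (n + 1) := fun h =>
    hne 0 (by rw [← finRotate_apply, ← h]; rfl)
  rw [← Matrix.det_transpose, Matrix.det_apply', ← sum_subset (subset_univ {1, finRotate (n + 1)}),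
    sum_pair hrot]
  · simp only [Equiv.Perm.sign_one, sign_finRotate, Matrix.transpose_apply, Matrix.sub_apply,
      Matrix.one_apply, Matrix.of_apply, Equiv.Perm.one_apply, finRotate_apply,
      (hne _).symm, if_true, if_false, sub_zero, zero_sub, prod_neg, prod_const_one, card_fin]
    rcases n.even_or_odd with h | h <;> simp [h.neg_one_pow, pow_succ, sub_eq_add_neg]
  · intro σ _ hσ
    obtain ⟨i, hi⟩ : ∃ i, ¬ (σ i = i ∨ σ i = i + 1) := by
      by_contra! h
      exact hσ (by simpa using eq_one_or_eq_finRotate h)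
    rw [not_or] at hi
    rw [prod_eq_zero (mem_univ i) (by simp [hi.2, Ne.symm hi.1]), mul_zero]

end Determinants

section Orderings

variable {α : Type*} {J : Finset α}

/-- The words `w(1) ⋯ w(n)` of the bijections `w : {1, …, n} → J`: the lists in which every element
of `J` occurs exactly once and nothing else occurs. -/
abbrev OrderingsOf (J : Finset α) : Type _ := {l : List α // l ∈ J.val.lists}

namespace OrderingsOf

lemma mem_lists_iff_coe {l : List α} : l ∈ J.val.lists ↔ (l : Multiset α) = J.val := by
  rw [Multiset.mem_lists_iff]
  exact eq_comm

lemma coe_eq (w : OrderingsOf J) : (w.1 : Multiset α) = J.val := mem_lists_iff_coe.1 w.2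

lemma nodup (w : OrderingsOf J) : w.1.Nodup := by
  rw [← Multiset.coe_nodup, w.coe_eq]
  exact J.nodup

lemma mem_iff (w : OrderingsOf J) {a : α} : a ∈ w.1 ↔ a ∈ J := by
  rw [← Multiset.mem_coe, w.coe_eq, mem_val]

lemma length_eq (w : OrderingsOf J) : w.1.length = #J := by
  rw [← Multiset.coe_card, w.coe_eq, card_val]

lemma prod_map {R : Type*} [CommMonoid R] (w : OrderingsOf J) (g : α → R) :
    (w.1.map g).prod = ∏ x ∈ J, g x := by
  rw [← Multiset.prod_coe, ← Multiset.map_coe, w.coe_eq]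
  rfl

lemma perm (w w' : OrderingsOf J) : w.1.Perm w'.1 := by
  rw [← Multiset.coe_eq_coe, w.coe_eq, w'.coe_eq]

lemma mem_lists_of_perm (w : OrderingsOf J) {l : List α} (h : l.Perm w.1) : l ∈ J.val.lists := by
  rw [mem_lists_iff_coe, ← w.coe_eq]
  exact Multiset.coe_eq_coe.2 h

lemma ne_nil (hJ : J.Nonempty) (w : OrderingsOf J) : w.1 ≠ [] := by
  rw [← List.length_pos_iff, w.length_eq]
  exact hJ.card_pos

lemma exists_eq_cons_cons (hJ : 2 ≤ #J) (w : OrderingsOf J) : ∃ a b v, w.1 = a :: b :: v := by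
  have hw := w.length_eq
  match h : w.1 with
  | [] =>
    rw [h, List.length_nil] at hw
    omega
  | [_] =>
    rw [h, List.length_singleton] at hw
    omega
  | a :: b :: v => exact ⟨a, b, v, rfl⟩

variable [DecidableEq α]

lemma card_eq_factorial (J : Finset α) : Fintype.card (OrderingsOf J) = (#J).factorial := by
  rw [Fintype.card_of_subtype J.val.lists.toFinset fun l => Multiset.mem_toFinset,
    Multiset.toFinset_card_of_nodup (Multiset.lists_nodup_finset J), ← J.coe_toList,
    Multiset.lists_coe, Multiset.coe_card, List.length_permutations, J.length_toList]

lemma cons_mem_lists_iff {a : α} {u : List α} :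
    a :: u ∈ J.val.lists ↔ a ∈ J ∧ u ∈ (J.erase a).val.lists := by
  rw [mem_lists_iff_coe, mem_lists_iff_coe, erase_val, ← Multiset.cons_coe]
  constructor
  · intro h
    rw [← mem_val, ← h]
    exact ⟨Multiset.mem_cons_self a _, (Multiset.erase_cons_head a _).symm⟩
  · rintro ⟨ha, hu⟩
    rw [hu, Multiset.cons_erase ha]

lemma append_singleton_mem_lists_iff {a : α} {u : List α} :
    u ++ [a] ∈ J.val.lists ↔ a ∈ J ∧ u ∈ (J.erase a).val.lists := by
  rw [← cons_mem_lists_iff, mem_lists_iff_coe, mem_lists_iff_coe,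
    Multiset.coe_eq_coe.2 (List.perm_append_singleton a u)]

/-- Splitting off the first letter of a word. -/
noncomputable def consEquiv (hJ : J.Nonempty) :
    (Σ a : J, OrderingsOf (J.erase a)) ≃ OrderingsOf J :=
  Equiv.ofBijective (fun x => ⟨x.1.1 :: x.2.1, cons_mem_lists_iff.2 ⟨x.1.2, x.2.2⟩⟩) <| by
    constructor
    · rintro ⟨⟨a, ha⟩, ⟨u, hu⟩⟩ ⟨⟨b, hb⟩, ⟨v, hv⟩⟩ h
      simp only [Subtype.mk.injEq, List.cons.injEq] at h
      obtain ⟨rfl, rfl⟩ := h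
      rfl
    · rintro ⟨l, hl⟩
      obtain ⟨a, u, rfl⟩ := List.exists_cons_of_ne_nil (ne_nil hJ ⟨l, hl⟩)
      obtain ⟨ha, hu⟩ := cons_mem_lists_iff.1 hl
      exact ⟨⟨⟨a, ha⟩, ⟨u, hu⟩⟩, rfl⟩

@[simp] lemma consEquiv_coe (hJ : J.Nonempty) (x : Σ a : J, OrderingsOf (J.erase a)) :
    (consEquiv hJ x).1 = x.1.1 :: x.2.1 := rfl

/-- Splitting off the last letter of a word. -/
noncomputable def snocEquiv (hJ : J.Nonempty) :
    (Σ a : J, OrderingsOf (J.erase a)) ≃ OrderingsOf J :=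
  Equiv.ofBijective
    (fun x => ⟨x.2.1 ++ [x.1.1], append_singleton_mem_lists_iff.2 ⟨x.1.2, x.2.2⟩⟩) <| by
    constructor
    · rintro ⟨⟨a, ha⟩, ⟨u, hu⟩⟩ ⟨⟨b, hb⟩, ⟨v, hv⟩⟩ h
      simp only [Subtype.mk.injEq, List.append_singleton_inj] at h
      obtain ⟨rfl, rfl⟩ := h
      rfl
    · rintro ⟨l, hl⟩
      obtain ⟨u, a, rfl⟩ := l.eq_nil_or_concat'.resolve_left (ne_nil hJ ⟨l, hl⟩)
      obtain ⟨ha, hu⟩ := append_singleton_mem_lists_iff.1 hl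
      exact ⟨⟨⟨a, ha⟩, ⟨u, hu⟩⟩, rfl⟩

@[simp] lemma snocEquiv_coe (hJ : J.Nonempty) (x : Σ a : J, OrderingsOf (J.erase a)) :
    (snocEquiv hJ x).1 = x.2.1 ++ [x.1.1] := rfl

/-- Every word is a rotation of exactly one word that starts with `a`. -/
noncomputable def rotationEquiv {a : α} {n : ℕ} (ha : a ∈ J) (hn : #J = n + 1) :
    Fin (n + 1) × OrderingsOf (J.erase a) ≃ OrderingsOf J :=
  Equiv.ofBijective
    (fun x => ⟨(a :: x.2.1).rotate x.1, mem_lists_of_perm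
      ⟨a :: x.2.1, cons_mem_lists_iff.2 ⟨ha, x.2.2⟩⟩ (List.rotate_perm _ _)⟩) <| by
    rw [Fintype.bijective_iff_surjective_and_card]
    constructor
    · intro w
      obtain ⟨s, t, hst⟩ := List.append_of_mem (w.mem_iff.2 ha)
      have hlen : (a :: (t ++ s)).length = n + 1 := by
        rw [← hn, ← w.length_eq, hst]
        grind
      have hrot : (a :: (t ++ s)).rotate (t.length + 1) = w.1 := by
        rw [hst]
        exact List.rotate_append_length_eq (a :: t) s
      have hmem : a :: (t ++ s) ∈ J.val.lists :=
        w.mem_lists_of_perm (hrot ▸ (List.rotate_perm _ _).symm)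
      refine ⟨⟨Fin.ofNat (n + 1) (t.length + 1), t ++ s, (cons_mem_lists_iff.1 hmem).2⟩,
        Subtype.ext ?_⟩
      simp only [Fin.val_ofNat, ← hlen, List.rotate_mod, hrot]
    · rw [Fintype.card_prod, Fintype.card_fin, card_eq_factorial, card_eq_factorial,
        card_erase_of_mem ha, hn, Nat.add_sub_cancel, Nat.factorial_succ]

@[simp] lemma rotationEquiv_coe {a : α} {n : ℕ} (ha : a ∈ J) (hn : #J = n + 1)
    (x : Fin (n + 1) × OrderingsOf (J.erase a)) :
    (rotationEquiv ha hn x).1 = (a :: x.2.1).rotate x.1 := rfl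

lemma rotationEquiv_add_one_coe {a : α} {n : ℕ} (ha : a ∈ J) (hn : #J = n + 1) (i : Fin (n + 1))
    (u : OrderingsOf (J.erase a)) :
    (rotationEquiv ha hn (i + 1, u)).1 = (rotationEquiv ha hn (i, u)).1.rotate 1 := by
  have hlen : (a :: u.1).length = n + 1 := by
    rw [List.length_cons, u.length_eq, card_erase_of_mem ha, hn, Nat.add_sub_cancel]
  simp only [rotationEquiv_coe, List.rotate_rotate, Fin.val_add, Fin.val_one']
  rw [Nat.add_mod_mod]
  simpa only [hlen] using List.rotate_mod (a :: u.1) (i + 1)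

lemma prod_head_rotationEquiv {R : Type*} [CommMonoid R] {a : α} {n : ℕ} (ha : a ∈ J)
    (hn : #J = n + 1) (u : OrderingsOf (J.erase a)) (c : α → R) :
    ∏ i, c ((rotationEquiv ha hn (i, u)).1.head (ne_nil ⟨a, ha⟩ _)) = ∏ x ∈ J, c x := by
  let w : OrderingsOf J := ⟨a :: u.1, cons_mem_lists_iff.2 ⟨ha, u.2⟩⟩
  rw [← w.prod_map c, ← Fin.prod_univ_fun_getElem,
    ← (finCongr (w.length_eq.trans hn).symm).prod_comp]
  refine prod_congr rfl fun i _ => congrArg c ?_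
  have hi : i.1 < w.1.length := (w.length_eq.trans hn).symm ▸ i.2
  simp only [rotationEquiv_coe, List.head_eq_getElem, List.getElem_rotate, zero_add,
    Nat.mod_eq_of_lt hi, finCongr_apply, Fin.val_cast, w]

end OrderingsOf

end Orderings

section OffDiagProd

variable {α M : Type*} [CommMonoid M]

/-- The product of `q s t` over all ordered pairs of distinct elements of `K`. -/
def offDiagProd [DecidableEq α] (q : α → α → M) (K : Finset α) : M :=
  ∏ a ∈ K, ∏ b ∈ K.erase a, q a b

lemma offDiagProd_eq_prod_erase [DecidableEq α] (q : α → α → M) {J : Finset α} {a : α}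
    (ha : a ∈ J) : offDiagProd q J = ∏ b ∈ J.erase a, q a b * ∏ x ∈ J.erase b, q b x := by
  rw [offDiagProd, ← mul_prod_erase J _ ha, ← prod_mul_distrib]

lemma offDiagProd_eq_prod_lt [LinearOrder α] (q : α → α → M) (K : Finset α) :
    offDiagProd q K = ∏ p ∈ K ×ˢ K with p.1 < p.2, q p.1 p.2 * q p.2 p.1 := by
  have herase (a : α) : ∏ b ∈ K.erase a, q a b =
      ∏ b ∈ K, (if a < b then q a b else 1) * if b < a then q a b else 1 := by
    rw [← filter_ne, prod_filter]
    refine prod_congr rfl fun b _ => ?_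
    obtain h | h | h := lt_trichotomy a b
    · simp [h, h.ne, h.not_gt]
    · simp [h]
    · simp [h, h.ne', h.not_gt]
  simp only [offDiagProd, herase, prod_filter, prod_product, prod_mul_distrib]
  rw [prod_comm (f := fun a b => if b < a then q a b else 1)]

lemma one_sub_offDiagProd_X_ne_zero [DecidableEq α] {K : Finset α} (hK : 2 ≤ #K) :
    (1 - offDiagProd (fun a b => MvPolynomial.X (a, b)) K : MvPolynomial (α × α) ℤ) ≠ 0 := by
  obtain ⟨a, ha, b, hb, hab⟩ := one_lt_card.1 hK
  have hconst : MvPolynomial.constantCoeff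
      (offDiagProd (fun a b => MvPolynomial.X (a, b)) K : MvPolynomial (α × α) ℤ) = 0 := by
    simp only [offDiagProd, map_prod, MvPolynomial.constantCoeff_X]
    exact prod_eq_zero ha (prod_eq_zero (mem_erase.2 ⟨hab.symm, hb⟩) rfl)
  intro h
  simpa [hconst] using congrArg MvPolynomial.constantCoeff h

end OffDiagProd

section WordOperators

variable {α R : Type*} [CommRing R]

/-- The span of the rearrangements of the word `l`. -/
def permSpan (R : Type*) [CommRing R] (l : List α) : Submodule R (List α →₀ R) :=
  Finsupp.supported R R {m | m.Perm l}

lemma single_mem_permSpan {l m : List α} (h : m.Perm l) (r : R) :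
    Finsupp.single m r ∈ permSpan R l :=
  Finsupp.single_mem_supported R r h

lemma permSpan_eq_span (l : List α) :
    permSpan R l = Submodule.span R ((fun m => Finsupp.single m 1) '' {m : List α | m.Perm l}) :=
  Finsupp.supported_eq_span_single R _

lemma permSpan_congr {l m : List α} (h : m.Perm l) : permSpan R m = permSpan R l := by
  rw [permSpan, permSpan]
  congr 1
  ext k
  exact ⟨fun hk => hk.trans h, fun hk => hk.trans h.symm⟩

lemma apply_eq_zero_of_mem_permSpan {l m : List α} {x : List α →₀ R} (hx : x ∈ permSpan R l)
    (h : ¬ m.Perm l) : x m = 0 :=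
  (Finsupp.mem_supported' R x).1 hx m h

/-- Linear operators on the free module spanned by all words. -/
abbrev WordOperator (α R : Type*) [CommRing R] : Type _ := Module.End R (List α →₀ R)

/-- The operator sends every word to a linear combination of its rearrangements. -/
def PreservesLetters (F : WordOperator α R) : Prop :=
  ∀ l, F (Finsupp.single l 1) ∈ permSpan R l

lemma PreservesLetters.map_mem {F : WordOperator α R} (hF : PreservesLetters F) {l : List α}
    {x : List α →₀ R} (hx : x ∈ permSpan R l) : F x ∈ permSpan R l := by
  suffices permSpan R l ≤ (permSpan R l).comap F from this hx
  rw [permSpan_eq_span, Submodule.span_le, ← permSpan_eq_span]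
  rintro _ ⟨m, hm, rfl⟩
  rw [← permSpan_congr hm]
  exact hF m

/-- The matrix of the operator `F` on the words of `J`; its rows hold the images of the words. -/
noncomputable def opMatrix (J : Finset α) (F : WordOperator α R) :
    Matrix (OrderingsOf J) (OrderingsOf J) R :=
  Matrix.of fun w w' => F (Finsupp.single w.1 1) w'.1

lemma opMatrix_apply (J : Finset α) (F : WordOperator α R) (w w' : OrderingsOf J) :
    opMatrix J F w w' = F (Finsupp.single w.1 1) w'.1 := rfl

lemma opMatrix_sub (J : Finset α) (F G : WordOperator α R) :
    opMatrix J (F - G) = opMatrix J F - opMatrix J G := rfl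

section OpMatrix

variable [DecidableEq α]

lemma opMatrix_one (J : Finset α) : opMatrix J (1 : WordOperator α R) = 1 := by
  ext w w'
  simp only [opMatrix_apply, Module.End.one_apply, Finsupp.single_apply, Matrix.one_apply,
    Subtype.ext_iff]

lemma sum_single_eq_of_mem_permSpan {J : Finset α} (w : OrderingsOf J) {x : List α →₀ R}
    (hx : x ∈ permSpan R w.1) : ∑ m : OrderingsOf J, Finsupp.single m.1 (x m.1) = x := by
  ext l
  rw [Finsupp.finsetSum_apply]
  by_cases hl : l.Perm w.1
  · rw [Fintype.sum_eq_single (⟨l, w.mem_lists_of_perm hl⟩ : OrderingsOf J),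
      Finsupp.single_eq_same]
    exact fun m hm => Finsupp.single_eq_of_ne fun h => hm (Subtype.ext h.symm)
  · rw [apply_eq_zero_of_mem_permSpan hx hl]
    refine sum_eq_zero fun m _ => Finsupp.single_eq_of_ne ?_
    rintro rfl
    exact hl (m.perm w)

/-- The order of the factors is reversed because the rows hold the images of the words. -/
lemma opMatrix_mul (J : Finset α) {F : WordOperator α R} (hF : PreservesLetters F)
    (G : WordOperator α R) : opMatrix J (G * F) = opMatrix J F * opMatrix J G := by
  ext w w'
  have hsmul (m : List α) (r : R) : Finsupp.single m r = r • Finsupp.single m 1 := by simp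
  rw [opMatrix_apply, Module.End.mul_apply, ← sum_single_eq_of_mem_permSpan w (hF w.1), map_sum,
    Finsupp.finsetSum_apply, Matrix.mul_apply]
  refine sum_congr rfl fun m _ => ?_
  rw [hsmul, map_smul, Finsupp.smul_apply, smul_eq_mul, opMatrix_apply, opMatrix_apply]

lemma det_opMatrix_of_card_le_one {J : Finset α} (hJ : #J ≤ 1) {F : WordOperator α R}
    (hF : ∀ l : List α, l.length ≤ 1 → F (Finsupp.single l 1) = Finsupp.single l 1) :
    (opMatrix J F).det = 1 := by
  rw [← Matrix.det_one (n := OrderingsOf J), ← opMatrix_one]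
  congr 1
  ext w w'
  rw [opMatrix_apply, hF w.1 (w.length_eq.trans_le hJ), opMatrix_apply, Module.End.one_apply]

end OpMatrix

/-- Prepending a letter to every word. -/
noncomputable def consOp (a : α) : WordOperator α R := Finsupp.lmapDomain R R (List.cons a)

/-- Appending a letter to every word. -/
noncomputable def snocOp (a : α) : WordOperator α R := Finsupp.lmapDomain R R (· ++ [a])

@[simp] lemma consOp_single (a : α) (l : List α) (r : R) :
    consOp a (Finsupp.single l r) = Finsupp.single (a :: l) r := by
  simp [consOp]

@[simp] lemma snocOp_single (a : α) (l : List α) (r : R) :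
    snocOp a (Finsupp.single l r) = Finsupp.single (l ++ [a]) r := by
  simp [snocOp]

lemma consOp_apply_cons (a : α) (x : List α →₀ R) (l : List α) : consOp a x (a :: l) = x l :=
  Finsupp.mapDomain_apply List.cons_injective x l

lemma consOp_apply_of_ne {a : α} (x : List α →₀ R) {l : List α} (h : ∀ m, l ≠ a :: m) :
    consOp a x l = 0 :=
  Finsupp.mapDomain_of_notMem_range x l fun ⟨m, hm⟩ => h m hm.symm

lemma snocOp_apply_snoc (a : α) (x : List α →₀ R) (l : List α) : snocOp a x (l ++ [a]) = x l :=
  Finsupp.mapDomain_apply (List.append_left_injective [a]) x l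

lemma snocOp_apply_of_ne {a : α} (x : List α →₀ R) {l : List α} (h : ∀ m, l ≠ m ++ [a]) :
    snocOp a x l = 0 :=
  Finsupp.mapDomain_of_notMem_range x l fun ⟨m, hm⟩ => h m hm.symm

lemma snocOp_consOp (a b : α) (x : List α →₀ R) :
    snocOp b (consOp a x) = consOp a (snocOp b x) := by
  simp only [snocOp, consOp, Finsupp.lmapDomain_apply, ← Finsupp.mapDomain_comp]
  rfl

lemma consOp_mem_permSpan {a : α} {l : List α} {x : List α →₀ R} (hx : x ∈ permSpan R l) :
    consOp a x ∈ permSpan R (a :: l) := by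
  suffices permSpan R l ≤ (permSpan R (a :: l)).comap (consOp a) from this hx
  rw [permSpan_eq_span, Submodule.span_le]
  rintro _ ⟨m, hm, rfl⟩
  simpa using single_mem_permSpan (hm.cons a) 1

/-- The operator that fixes the first letter `a` and acts on the remaining letters by `F a`. -/
noncomputable def actTail (F : α → WordOperator α R) : WordOperator α R :=
  Finsupp.linearCombination R fun
    | [] => Finsupp.single [] 1
    | a :: u => consOp a (F a (Finsupp.single u 1))

@[simp] lemma actTail_single_nil (F : α → WordOperator α R) :
    actTail F (Finsupp.single [] 1) = Finsupp.single [] 1 := by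
  simp [actTail]

@[simp] lemma actTail_single_cons (F : α → WordOperator α R) (a : α) (u : List α) :
    actTail F (Finsupp.single (a :: u) 1) = consOp a (F a (Finsupp.single u 1)) := by
  simp [actTail]

lemma PreservesLetters.actTail {F : α → WordOperator α R} (hF : ∀ a, PreservesLetters (F a)) :
    PreservesLetters (actTail F)
  | [] => by
    rw [actTail_single_nil]
    exact single_mem_permSpan (List.Perm.refl _) 1
  | a :: u => by
    rw [actTail_single_cons]
    exact consOp_mem_permSpan (hF a u)

/-- The operator that fixes the last letter and acts on the remaining letters by `F`. -/
noncomputable def actInit (F : WordOperator α R) : WordOperator α R :=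
  Finsupp.linearCombination R fun l =>
    if h : l = [] then Finsupp.single [] 1
    else snocOp (l.getLast h) (F (Finsupp.single l.dropLast 1))

@[simp] lemma actInit_single_snoc (F : WordOperator α R) (u : List α) (a : α) :
    actInit F (Finsupp.single (u ++ [a]) 1) = snocOp a (F (Finsupp.single u 1)) := by
  simp [actInit]

/-- The operator that moves the first letter `a` of a word `a :: v` to the end, with the scalar
factor `wt a v`. -/
noncomputable def rotateOp (wt : α → List α → R) : WordOperator α R :=
  Finsupp.linearCombination R fun
    | [] => 0
    | a :: v => Finsupp.single (v ++ [a]) (wt a v)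

@[simp] lemma rotateOp_single_cons (wt : α → List α → R) (a : α) (v : List α) :
    rotateOp wt (Finsupp.single (a :: v) 1) = Finsupp.single (v ++ [a]) (wt a v) := by
  simp [rotateOp]

lemma rotateOp_consOp {wt : α → List α → R} {a : α} {v : List α} {x : List α →₀ R}
    (hx : x ∈ permSpan R v) (hwt : ∀ u, u.Perm v → wt a u = wt a v) :
    rotateOp wt (consOp a x) = wt a v • snocOp a x := by
  rw [permSpan_eq_span] at hx
  refine LinearMap.eqOn_span (f := rotateOp wt ∘ₗ consOp a) (g := wt a v • snocOp a) ?_ hx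
  rintro _ ⟨u, hu, rfl⟩
  simp [hwt u hu]

lemma preservesLetters_one_sub_rotateOp (wt : α → List α → R) :
    PreservesLetters (1 - rotateOp wt) := by
  refine fun l => sub_mem (single_mem_permSpan (List.Perm.refl l) 1) ?_
  cases l with
  | nil => simp [rotateOp]
  | cons a v =>
    rw [rotateOp_single_cons]
    exact single_mem_permSpan (List.perm_append_singleton a v) _

variable [DecidableEq α] {J : Finset α}

lemma det_actTail (hJ : J.Nonempty) (F : α → WordOperator α R) :
    (opMatrix J (actTail F)).det = ∏ a ∈ J, (opMatrix (J.erase a) (F a)).det := by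
  rw [← prod_coe_sort J fun a => (opMatrix (J.erase a) (F a)).det]
  refine det_eq_prod_of_sigmaEquiv (OrderingsOf.consEquiv hJ) _ _ (fun a u v => ?_)
    fun a b u v hab => ?_
  · simp [opMatrix_apply, consOp_apply_cons]
  · have hba : b.1 ≠ a.1 := fun h => hab (Subtype.ext h.symm)
    rw [opMatrix_apply, OrderingsOf.consEquiv_coe, actTail_single_cons, OrderingsOf.consEquiv_coe]
    exact consOp_apply_of_ne _ fun m => by simp [hba]

lemma det_actInit (hJ : J.Nonempty) (F : WordOperator α R) :
    (opMatrix J (actInit F)).det = ∏ a ∈ J, (opMatrix (J.erase a) F).det := by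
  rw [← prod_coe_sort J fun a => (opMatrix (J.erase a) F).det]
  refine det_eq_prod_of_sigmaEquiv (OrderingsOf.snocEquiv hJ) _ _ (fun a u v => ?_)
    fun a b u v hab => ?_
  · simp [opMatrix_apply, snocOp_apply_snoc]
  · have hba : b.1 ≠ a.1 := fun h => hab (Subtype.ext h.symm)
    rw [opMatrix_apply, OrderingsOf.snocEquiv_coe, actInit_single_snoc, OrderingsOf.snocEquiv_coe]
    exact snocOp_apply_of_ne _ fun m => by simp [hba]

lemma opMatrix_rotateOp_apply (hJ : J.Nonempty) {wt : α → List α → R} {c : α → R}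
    (hwt : ∀ b v, b :: v ∈ J.val.lists → wt b v = c b) (w w' : OrderingsOf J) :
    opMatrix J (rotateOp wt) w w' =
      if w.1.rotate 1 = w'.1 then c (w.1.head (w.ne_nil hJ)) else 0 := by
  obtain ⟨b, v, hw⟩ := List.exists_cons_of_ne_nil (w.ne_nil hJ)
  simp only [opMatrix_apply, hw, rotateOp_single_cons, Finsupp.single_apply,
    List.rotate_cons_succ, List.rotate_zero, List.head_cons, hwt b v (hw ▸ w.2)]

lemma det_one_sub_rotateOp (hJ : J.Nonempty) {wt : α → List α → R} {c : α → R}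
    (hwt : ∀ b v, b :: v ∈ J.val.lists → wt b v = c b) :
    (opMatrix J (1 - rotateOp wt)).det = (1 - ∏ x ∈ J, c x) ^ (#J - 1).factorial := by
  obtain ⟨a, ha⟩ := hJ
  obtain ⟨n, hn⟩ := Nat.exists_eq_add_one.2 (card_pos.2 ⟨a, ha⟩)
  let e := OrderingsOf.rotationEquiv ha hn
  let cycle (u : OrderingsOf (J.erase a)) : Matrix (Fin (n + 1)) (Fin (n + 1)) R :=
    Matrix.of fun i j =>
      if j = i + 1 then c ((e (i, u)).1.head (OrderingsOf.ne_nil ⟨a, ha⟩ _)) else 0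
  have hblock : (opMatrix J (1 - rotateOp wt)).submatrix e e =
      Matrix.blockDiagonal fun u => 1 - cycle u := by
    ext ⟨i, u⟩ ⟨j, v⟩
    rw [Matrix.submatrix_apply, opMatrix_sub, opMatrix_one, Matrix.sub_apply,
      opMatrix_rotateOp_apply ⟨a, ha⟩ hwt, ← OrderingsOf.rotationEquiv_add_one_coe,
      Matrix.one_apply, Matrix.blockDiagonal_apply]
    simp only [e, ← Subtype.ext_iff, EmbeddingLike.apply_eq_iff_eq, Prod.mk.injEq, Matrix.sub_apply,
      Matrix.one_apply, cycle, Matrix.of_apply]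
    by_cases huv : u = v <;> simp [huv, eq_comm]
  rw [← Matrix.det_submatrix_equiv_self e, hblock, Matrix.det_blockDiagonal]
  simp only [cycle, e, det_one_sub_weightedCycle, OrderingsOf.prod_head_rotationEquiv, prod_const,
    card_univ, OrderingsOf.card_eq_factorial, card_erase_of_mem ha]

end WordOperators

section Symmetrizer

variable {α R : Type*} [CommRing R] (q : α → α → R)

/-- The sum of all insertions of the letter `a` into a word, a factor `q a b` being collected
whenever `a` passes `b`. -/
noncomputable def insertions (a : α) : List α → (List α →₀ R)
  | [] => Finsupp.single [a] 1
  | b :: v => Finsupp.single (a :: b :: v) 1 + q a b • consOp b (insertions a v)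

lemma insertions_mem_permSpan (a : α) (v : List α) : insertions q a v ∈ permSpan R (a :: v) := by
  induction v with
  | nil => exact single_mem_permSpan (List.Perm.refl _) 1
  | cons b v ih =>
    refine add_mem (single_mem_permSpan (List.Perm.refl _) 1) (Submodule.smul_mem _ _ ?_)
    rw [← permSpan_congr (List.Perm.swap a b v)]
    exact consOp_mem_permSpan ih

lemma insertions_snoc (a c : α) (u : List α) :
    insertions q a (u ++ [c]) = snocOp c (insertions q a u) +
      Finsupp.single (u ++ [c] ++ [a]) ((u ++ [c]).map (q a)).prod := by
  induction u with
  | nil => simp [insertions]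
  | cons b u ih =>
    rw [List.cons_append, insertions, ih, insertions]
    simp only [map_add, map_smul, smul_add, snocOp_single, consOp_single, snocOp_consOp,
      Finsupp.smul_single, smul_eq_mul, List.map_cons, List.prod_cons, List.cons_append, add_assoc]

/-- The operator that inserts the first letter of a word into the remaining letters in all possible
ways, with the weights of `insertions`. -/
noncomputable def moveHead : WordOperator α R :=
  Finsupp.linearCombination R fun
    | [] => Finsupp.single [] 1
    | a :: v => insertions q a v

@[simp] lemma moveHead_single_nil :
    moveHead q (Finsupp.single [] 1) = Finsupp.single [] 1 := by
  simp [moveHead]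

@[simp] lemma moveHead_single_cons (a : α) (v : List α) :
    moveHead q (Finsupp.single (a :: v) 1) = insertions q a v := by
  simp [moveHead]

lemma preservesLetters_moveHead : PreservesLetters (moveHead q)
  | [] => by
    rw [moveHead_single_nil]
    exact single_mem_permSpan (List.Perm.refl _) 1
  | a :: v => by
    rw [moveHead_single_cons]
    exact insertions_mem_permSpan q a v

/-- The sum of all rearrangements of a word, each weighted by the product of `q a b` over its
inversions, that is, the pairs in which `a` has moved past `b` from left to right. -/
noncomputable def rearrangements : List α → (List α →₀ R)
  | [] => Finsupp.single [] 1
  | a :: u => moveHead q (consOp a (rearrangements u))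

/-- The linear extension of `rearrangements`; its matrix on the words of `J` is `M_J`. -/
noncomputable def symmetrizer : WordOperator α R :=
  Finsupp.linearCombination R (rearrangements q)

@[simp] lemma symmetrizer_single_nil :
    symmetrizer q (Finsupp.single [] 1) = Finsupp.single [] 1 := by
  simp [symmetrizer, rearrangements]

lemma symmetrizer_single_cons (a : α) (u : List α) :
    symmetrizer q (Finsupp.single (a :: u) 1) =
      moveHead q (consOp a (symmetrizer q (Finsupp.single u 1))) := by
  simp [symmetrizer, rearrangements]

lemma preservesLetters_symmetrizer : PreservesLetters (symmetrizer q) := by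
  intro l
  induction l with
  | nil =>
    rw [symmetrizer_single_nil]
    exact single_mem_permSpan (List.Perm.refl _) 1
  | cons a u ih =>
    rw [symmetrizer_single_cons]
    exact (preservesLetters_moveHead q).map_mem (consOp_mem_permSpan ih)

lemma symmetrizer_eq_moveHead_mul :
    symmetrizer q = moveHead q * actTail fun _ => symmetrizer q := by
  refine Finsupp.lhom_ext' fun l => LinearMap.ext_ring ?_
  cases l with
  | nil => simp
  | cons a u => simp [symmetrizer_single_cons]

/-- The operator that moves the first letter `a` of a word to the end, a factor `q a b` being
collected whenever `a` passes `b`. -/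
noncomputable def headToEnd : WordOperator α R :=
  rotateOp fun a v => (v.map (q a)).prod

/-- Acting behind a first letter `a`, the operator moves the second letter across `a` and back, and
then to the end of the word. -/
noncomputable def sndToEnd (a : α) : WordOperator α R :=
  rotateOp fun b v => q a b * ((a :: v).map (q b)).prod

lemma moveHead_single_cons_cons (a b : α) (v : List α) :
    moveHead q (Finsupp.single (a :: b :: v) 1) =
      actInit (moveHead q) (Finsupp.single (a :: b :: v) 1) +
        headToEnd q (Finsupp.single (a :: b :: v) 1) := by
  obtain ⟨u, c, hu⟩ := (b :: v).eq_nil_or_concat'.resolve_left (List.cons_ne_nil b v)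
  rw [hu, ← List.cons_append, actInit_single_snoc, List.cons_append, moveHead_single_cons,
    moveHead_single_cons, insertions_snoc, headToEnd, rotateOp_single_cons]

lemma headToEnd_moveHead_single_cons_cons (a b : α) (v : List α) :
    headToEnd q (moveHead q (Finsupp.single (a :: b :: v) 1)) =
      headToEnd q (Finsupp.single (a :: b :: v) 1) +
        (q a b * ((a :: v).map (q b)).prod) • snocOp b (insertions q a v) := by
  rw [moveHead_single_cons, insertions, map_add, map_smul, headToEnd,
    rotateOp_consOp (insertions_mem_permSpan q a v) fun u hu => (hu.map (q b)).prod_eq, smul_smul]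

lemma one_sub_headToEnd_moveHead_single_cons_cons (a b : α) (v : List α) :
    (1 - headToEnd q) (moveHead q (Finsupp.single (a :: b :: v) 1)) =
      actInit (moveHead q)
        (actTail (fun a => 1 - sndToEnd q a) (Finsupp.single (a :: b :: v) 1)) := by
  set s := q a b * ((a :: v).map (q b)).prod with hs
  have hinit : actInit (moveHead q) (Finsupp.single (a :: (v ++ [b])) s) =
      s • snocOp b (insertions q a v) := by
    rw [← mul_one s, ← smul_eq_mul, ← Finsupp.smul_single, map_smul, ← List.cons_append,
      actInit_single_snoc, moveHead_single_cons, smul_eq_mul, mul_one]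
  rw [LinearMap.sub_apply, Module.End.one_apply, headToEnd_moveHead_single_cons_cons,
    moveHead_single_cons_cons, actTail_single_cons, LinearMap.sub_apply, Module.End.one_apply,
    sndToEnd, rotateOp_single_cons, map_sub, map_sub, consOp_single, consOp_single, ← hs, hinit]
  abel

variable [DecidableEq α] {J : Finset α}

lemma det_one_sub_headToEnd (hJ : J.Nonempty) :
    (opMatrix J (1 - headToEnd q)).det = (1 - offDiagProd q J) ^ (#J - 1).factorial :=
  det_one_sub_rotateOp hJ fun a _ hv =>
    OrderingsOf.prod_map ⟨_, (OrderingsOf.cons_mem_lists_iff.1 hv).2⟩ (q a)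

lemma det_one_sub_sndToEnd {a : α} (ha : a ∈ J) (hJ : 2 ≤ #J) :
    (opMatrix (J.erase a) (1 - sndToEnd q a)).det =
      (1 - offDiagProd q J) ^ (#J - 2).factorial := by
  have hcard : #(J.erase a) = #J - 1 := card_erase_of_mem ha
  rw [offDiagProd_eq_prod_erase q ha, sndToEnd, det_one_sub_rotateOp (card_pos.1 (by omega))
    (c := fun b => q a b * ∏ x ∈ J.erase b, q b x), hcard, Nat.sub_sub]
  intro b v hbv
  have hmem : b :: a :: v ∈ J.val.lists :=
    OrderingsOf.mem_lists_of_perm ⟨_, OrderingsOf.cons_mem_lists_iff.2 ⟨ha, hbv⟩⟩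
      (List.Perm.swap a b v)
  rw [OrderingsOf.prod_map ⟨_, (OrderingsOf.cons_mem_lists_iff.1 hmem).2⟩ (q b)]

lemma opMatrix_moveHead_mul_one_sub_headToEnd (hJ : 2 ≤ #J) :
    opMatrix J (moveHead q) * opMatrix J (1 - headToEnd q) =
      opMatrix J (actTail fun a => 1 - sndToEnd q a) * opMatrix J (actInit (moveHead q)) := by
  have htail : PreservesLetters (actTail fun a => 1 - sndToEnd q a) :=
    PreservesLetters.actTail fun _ => preservesLetters_one_sub_rotateOp _
  rw [← opMatrix_mul J (preservesLetters_moveHead q), ← opMatrix_mul J htail]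
  ext w w'
  obtain ⟨a, b, v, hw⟩ := w.exists_eq_cons_cons hJ
  rw [opMatrix_apply, opMatrix_apply, hw, Module.End.mul_apply, Module.End.mul_apply,
    one_sub_headToEnd_moveHead_single_cons_cons]

lemma det_moveHead_mul (hJ : 2 ≤ #J) :
    (opMatrix J (moveHead q)).det * (1 - offDiagProd q J) ^ (#J - 1).factorial =
      (1 - offDiagProd q J) ^ (#J * (#J - 2).factorial) *
        ∏ a ∈ J, (opMatrix (J.erase a) (moveHead q)).det := by
  have hne : J.Nonempty := card_pos.1 (by omega)
  have htail : (opMatrix J (actTail fun a => 1 - sndToEnd q a)).det =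
      (1 - offDiagProd q J) ^ (#J * (#J - 2).factorial) := by
    rw [det_actTail hne, prod_congr rfl fun a ha => det_one_sub_sndToEnd q ha hJ, prod_const,
      ← pow_mul, mul_comm]
  rw [← det_one_sub_headToEnd q hne, ← htail, ← det_actInit hne, ← Matrix.det_mul,
    ← Matrix.det_mul, opMatrix_moveHead_mul_one_sub_headToEnd q hJ]

lemma det_symmetrizer_eq_mul (hJ : J.Nonempty) :
    (opMatrix J (symmetrizer q)).det =
      (∏ a ∈ J, (opMatrix (J.erase a) (symmetrizer q)).det) * (opMatrix J (moveHead q)).det := by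
  conv_lhs => rw [symmetrizer_eq_moveHead_mul]
  rw [opMatrix_mul J (PreservesLetters.actTail fun _ => preservesLetters_symmetrizer q),
    Matrix.det_mul, det_actTail hJ]

end Symmetrizer

section ProductFormula

variable {α R : Type*}

lemma filter_two_le_card_powerset_eq_empty {J : Finset α} (hJ : #J ≤ 1) :
    {K ∈ J.powerset | 2 ≤ #K} = ∅ :=
  filter_eq_empty_iff.2 fun _ hK => by
    have := card_le_card (mem_powerset.1 hK)
    omega

variable [DecidableEq α]

lemma prod_prod_powerset_erase_filter {M : Type*} [CommMonoid M] (J : Finset α)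
    (p : Finset α → Prop) [DecidablePred p] (f : Finset α → M) :
    ∏ a ∈ J, ∏ K ∈ (J.erase a).powerset with p K, f K =
      ∏ K ∈ J.powerset with p K, f K ^ (#J - #K) := by
  rw [prod_comm' (t' := {K ∈ J.powerset | p K}) (s' := fun K => J \ K)]
  · refine prod_congr rfl fun K hK => ?_
    rw [prod_const, card_sdiff_of_subset (mem_powerset.1 (mem_filter.1 hK).1)]
  · intro a K
    simp only [mem_filter, mem_powerset, mem_sdiff, subset_erase]
    tauto

variable [CommRing R] (q : α → α → R)

lemma det_moveHead_eq_mul {J : Finset α} (hJ : 2 ≤ #J)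
    (hX : 1 - offDiagProd q J ∈ nonZeroDivisors R) :
    (opMatrix J (moveHead q)).det = (1 - offDiagProd q J) ^ (#J - 2).factorial *
      ∏ a ∈ J, (opMatrix (J.erase a) (moveHead q)).det := by
  have hfac : #J * (#J - 2).factorial = (#J - 2).factorial + (#J - 1).factorial := by
    obtain ⟨m, hm⟩ := Nat.exists_eq_add_of_le' hJ
    rw [hm, Nat.add_sub_cancel, show m + 2 - 1 = m + 1 from rfl, Nat.factorial_succ]
    ring
  have hdet := det_moveHead_mul q hJ
  rw [hfac, pow_add, mul_right_comm] at hdet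
  exact (mul_cancel_right_mem_nonZeroDivisors (pow_mem hX _)).1 hdet

lemma det_moveHead (J : Finset α)
    (hX : ∀ K ⊆ J, 2 ≤ #K → 1 - offDiagProd q K ∈ nonZeroDivisors R) :
    (opMatrix J (moveHead q)).det = ∏ K ∈ J.powerset with 2 ≤ #K,
      (1 - offDiagProd q K) ^ ((#K - 2).factorial * (#J - #K).factorial) := by
  induction J using Finset.strongInduction with
  | H J ih =>
    obtain hJ | hJ := Nat.lt_or_ge #J 2
    · rw [filter_two_le_card_powerset_eq_empty (by omega), prod_empty,
        det_opMatrix_of_card_le_one (by omega)]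
      rintro (_ | ⟨a, _ | ⟨b, v⟩⟩) hl <;> simp_all [insertions]
    have herase : ∀ a ∈ J, (opMatrix (J.erase a) (moveHead q)).det =
        ∏ K ∈ (J.erase a).powerset with 2 ≤ #K,
          (1 - offDiagProd q K) ^ ((#K - 2).factorial * (#J - 1 - #K).factorial) := by
      intro a ha
      rw [ih _ (erase_ssubset ha) fun K hK => hX K (hK.trans (erase_subset a J)),
        card_erase_of_mem ha]
    have hmem : J ∈ {K ∈ J.powerset | 2 ≤ #K} := by simpa using hJ
    rw [det_moveHead_eq_mul q hJ (hX J subset_rfl hJ), prod_congr rfl herase,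
      prod_prod_powerset_erase_filter, ← mul_prod_erase _ _ hmem, ← mul_prod_erase _ _ hmem,
      Nat.sub_self, pow_zero, one_mul, Nat.factorial_zero, mul_one]
    refine congrArg _ (prod_congr rfl fun K hK => ?_)
    obtain ⟨hKJ, hK⟩ := mem_erase.1 hK
    have hlt := card_lt_card ((mem_powerset.1 (mem_filter.1 hK).1).ssubset_of_ne hKJ)
    have hfac : (#J - 1 - #K).factorial * (#J - #K) = (#J - #K).factorial := by
      rw [Nat.sub_right_comm, mul_comm, Nat.mul_factorial_pred (by omega)]
    rw [← pow_mul, mul_assoc, hfac]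

lemma det_symmetrizer (J : Finset α)
    (hX : ∀ K ⊆ J, 2 ≤ #K → 1 - offDiagProd q K ∈ nonZeroDivisors R) :
    (opMatrix J (symmetrizer q)).det = ∏ K ∈ J.powerset with 2 ≤ #K,
      (1 - offDiagProd q K) ^ ((#K - 2).factorial * (#J - #K + 1).factorial) := by
  induction J using Finset.strongInduction with
  | H J ih =>
    obtain hJ | hJ := Nat.lt_or_ge #J 2
    · rw [filter_two_le_card_powerset_eq_empty (by omega), prod_empty,
        det_opMatrix_of_card_le_one (by omega)]
      rintro (_ | ⟨a, _ | ⟨b, v⟩⟩) hl <;> simp_all [symmetrizer_single_cons, insertions]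
    have herase : ∀ a ∈ J, (opMatrix (J.erase a) (symmetrizer q)).det =
        ∏ K ∈ (J.erase a).powerset with 2 ≤ #K,
          (1 - offDiagProd q K) ^ ((#K - 2).factorial * (#J - 1 - #K + 1).factorial) := by
      intro a ha
      rw [ih _ (erase_ssubset ha) fun K hK => hX K (hK.trans (erase_subset a J)),
        card_erase_of_mem ha]
    rw [det_symmetrizer_eq_mul q (card_pos.1 (by omega)), det_moveHead q J hX,
      prod_congr rfl herase, prod_prod_powerset_erase_filter, ← prod_mul_distrib]
    refine prod_congr rfl fun K hK => ?_
    rw [← pow_mul, ← pow_add]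
    congr 1
    obtain hKJ | hKJ := (card_le_card (mem_powerset.1 (mem_filter.1 hK).1)).eq_or_lt
    · simp [hKJ]
    · rw [show #J - 1 - #K + 1 = #J - #K by omega, Nat.factorial_succ]
      ring

end ProductFormula

section Entries

variable {α R : Type*}

section PairProd

variable [CommMonoid R]

/-- The product of `g x y` over all pairs of letters of a word, `x` standing to the left of `y`. -/
def pairProd (g : α → α → R) : List α → R
  | [] => 1
  | a :: u => (u.map (g a)).prod * pairProd g u

lemma pairProd_congr {g g' : α → α → R} {l : List α}
    (h : ∀ x ∈ l, ∀ y ∈ l, g x y = g' x y) : pairProd g l = pairProd g' l := by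
  induction l with
  | nil => rfl
  | cons a u ih =>
    rw [pairProd, pairProd, ih fun x hx y hy => h x (by simp [hx]) y (by simp [hy]),
      List.map_congr_left fun y hy => h a (by simp) y (by simp [hy])]

lemma pairProd_ofFn (g : α → α → R) {n : ℕ} (f : Fin n → α) :
    pairProd g (List.ofFn f) = ∏ p : Fin n × Fin n with p.1 < p.2, g (f p.1) (f p.2) := by
  rw [prod_filter, Fintype.prod_prod_type]
  induction n with
  | zero => simp [pairProd]
  | succ n ih =>
    rw [List.ofFn_succ, pairProd, ih, Fin.prod_univ_succ]
    simp [Fin.prod_univ_succ, List.map_ofFn, List.prod_ofFn]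

end PairProd

variable [CommRing R] (q : α → α → R)

lemma insertions_apply [DecidableEq α] {a : α} {v s t : List α} (hv : a ∉ v) :
    insertions q a v (s ++ a :: t) = if v = s ++ t then (s.map (q a)).prod else 0 := by
  induction v generalizing s with
  | nil =>
    cases s with
    | nil => simp [insertions, Finsupp.single_apply, List.nil_eq]
    | cons c s => simp [insertions]
  | cons b v ih =>
    obtain ⟨hab, hav⟩ := List.ne_and_not_mem_of_not_mem_cons hv
    rw [insertions, Finsupp.add_apply, Finsupp.smul_apply]
    cases s with
    | nil =>
      rw [List.nil_append, consOp_apply_of_ne _ (by simp [hab])]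
      simp [Finsupp.single_apply]
    | cons c s =>
      have hne : a :: b :: v ≠ c :: s ++ a :: t := fun h => hv ((List.cons.inj h).2 ▸ by simp)
      rw [Finsupp.single_eq_of_ne hne.symm, zero_add]
      obtain rfl | hcb := eq_or_ne c b
      · rw [List.cons_append, consOp_apply_cons, ih hav]
        simp
      · rw [consOp_apply_of_ne _ (by simp [hcb])]
        simp [hcb.symm]

lemma moveHead_consOp_apply {a : α} {u s t : List α} (hu : a ∉ u) {x : List α →₀ R}
    (hx : x ∈ permSpan R u) :
    moveHead q (consOp a x) (s ++ a :: t) = (s.map (q a)).prod * x (s ++ t) := by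
  classical
  rw [permSpan_eq_span] at hx
  refine LinearMap.eqOn_span (f := Finsupp.lapply (s ++ a :: t) ∘ₗ moveHead q ∘ₗ consOp a)
    (g := (s.map (q a)).prod • Finsupp.lapply (s ++ t)) ?_ hx
  rintro _ ⟨v, hv, rfl⟩
  have hav : a ∉ v := fun h => hu (hv.mem_iff.1 h)
  simp [insertions_apply q hav, Finsupp.single_apply]

variable [DecidableEq α]

lemma idxOf_append_cons_of_ne {a x : α} {s t : List α} (hx : a ≠ x) :
    (s ++ a :: t).idxOf x = if x ∈ s then s.idxOf x else s.length + (t.idxOf x + 1) := by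
  split_ifs with h
  · exact List.idxOf_append_of_mem h
  · rw [List.idxOf_append_of_notMem h, List.idxOf_cons_ne t hx]

lemma idxOf_append_cons_lt_iff {a x y : α} {s t : List α} (hx : a ≠ x) (hy : a ≠ y) :
    (s ++ a :: t).idxOf y < (s ++ a :: t).idxOf x ↔ (s ++ t).idxOf y < (s ++ t).idxOf x := by
  rw [idxOf_append_cons_of_ne hx, idxOf_append_cons_of_ne hy, List.idxOf_append, List.idxOf_append]
  have hlt {z : α} (hz : z ∈ s) := List.idxOf_lt_length_of_mem hz
  split_ifs with h₁ h₂ h₂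
  · rfl
  · have := hlt h₁
    omega
  · have := hlt h₂
    omega
  · omega

lemma idxOf_append_cons_lt_idxOf_self_iff {a y : α} {s t : List α} (ha : a ∉ s) :
    (s ++ a :: t).idxOf y < (s ++ a :: t).idxOf a ↔ y ∈ s := by
  rw [List.idxOf_append_of_notMem ha, List.idxOf_cons_self, add_zero, List.idxOf_append]
  split_ifs with h
  · exact iff_of_true (List.idxOf_lt_length_of_mem h) h
  · exact iff_of_false (by omega) h

lemma symmetrizer_single_apply {l m : List α} (hl : l.Nodup) (hlm : m.Perm l) :
    symmetrizer q (Finsupp.single l 1) m =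
      pairProd (fun x y => if m.idxOf y < m.idxOf x then q x y else 1) l := by
  induction l generalizing m with
  | nil => simp [pairProd, hlm.eq_nil]
  | cons a u ih =>
    obtain ⟨s, t, rfl⟩ := List.append_of_mem (hlm.mem_iff.2 List.mem_cons_self)
    obtain ⟨hau, hu⟩ := List.nodup_cons.1 hl
    have hperm : (s ++ t).Perm u := (List.perm_cons a).1 (List.perm_middle.symm.trans hlm)
    have has : a ∉ s := fun h => hau (hperm.mem_iff.1 (List.mem_append_left t h))
    have hst : ∀ y ∈ t, y ∉ s := fun y hy h =>
      (List.nodup_append.1 (hperm.nodup_iff.2 hu)).2.2 y h y hy rfl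
    have hhead : (u.map fun y => if (s ++ a :: t).idxOf y < (s ++ a :: t).idxOf a
        then q a y else 1).prod = (s.map (q a)).prod := by
      simp only [idxOf_append_cons_lt_idxOf_self_iff has]
      rw [← (hperm.map _).prod_eq, List.map_append, List.prod_append,
        List.map_congr_left fun y hy => if_pos hy,
        List.map_congr_left fun y hy => if_neg (hst y hy)]
      simp
    have htail : pairProd (fun x y => if (s ++ a :: t).idxOf y < (s ++ a :: t).idxOf x
        then q x y else 1) u = symmetrizer q (Finsupp.single u 1) (s ++ t) := by
      rw [ih hu hperm]
      exact pairProd_congr fun x hx y hy => if_congr (idxOf_append_cons_lt_iff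
        (ne_of_mem_of_not_mem hx hau).symm (ne_of_mem_of_not_mem hy hau).symm) rfl rfl
    rw [symmetrizer_single_cons, moveHead_consOp_apply q hau (preservesLetters_symmetrizer q u),
      pairProd, hhead, htail]

/-- Bijections `Fin #J ≃ J` as words. -/
noncomputable def wordEquiv (J : Finset α) : (Fin #J ≃ {x : α // x ∈ J}) ≃ OrderingsOf J :=
  Equiv.ofBijective
    (fun w => ⟨List.ofFn fun i => (w i : α), OrderingsOf.mem_lists_iff_coe.2 <| by
      refine (Multiset.Nodup.ext ?_ J.nodup).2 fun x => ?_
      · exact Multiset.coe_nodup.2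
          (List.nodup_ofFn.2 (Subtype.val_injective.comp w.injective))
      · rw [Multiset.mem_coe, List.mem_ofFn, mem_val]
        constructor
        · rintro ⟨i, rfl⟩
          exact (w i).2
        · exact fun hx => ⟨w.symm ⟨x, hx⟩, by simp⟩⟩) <| by
    rw [Fintype.bijective_iff_injective_and_card]
    constructor
    · intro w w' h
      ext i
      exact congrFun (List.ofFn_injective (Subtype.ext_iff.1 h)) i
    · rw [OrderingsOf.card_eq_factorial, Fintype.card_equiv J.equivFin.symm, Fintype.card_fin]

lemma wordEquiv_coe {J : Finset α} (w : Fin #J ≃ {x : α // x ∈ J}) :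
    (wordEquiv J w).1 = List.ofFn fun i => (w i : α) := rfl

lemma idxOf_wordEquiv {J : Finset α} (w : Fin #J ≃ {x : α // x ∈ J}) (x : {x : α // x ∈ J}) :
    (wordEquiv J w).1.idxOf (x : α) = w.symm x := by
  have h := List.Nodup.idxOf_getElem (wordEquiv J w).nodup (w.symm x)
    (by rw [OrderingsOf.length_eq]; exact (w.symm x).2)
  simpa [wordEquiv_coe] using h

/-- The matrix `M_J` with arbitrary elements `q s t` of a commutative ring in place of the
indeterminates. -/
def inversionMatrix (J : Finset α) :
    Matrix (Fin #J ≃ {x : α // x ∈ J}) (Fin #J ≃ {x : α // x ∈ J}) R :=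
  Matrix.of fun w w' =>
    ∏ p : Fin #J × Fin #J with p.1 < p.2 ∧ w'.symm (w p.2) < w'.symm (w p.1), q (w p.1) (w p.2)

lemma inversionMatrix_eq_submatrix (J : Finset α) :
    inversionMatrix q J = (opMatrix J (symmetrizer q)).submatrix (wordEquiv J) (wordEquiv J) := by
  ext w w'
  rw [inversionMatrix, Matrix.of_apply, Matrix.submatrix_apply, opMatrix_apply,
    symmetrizer_single_apply q (OrderingsOf.nodup _) (OrderingsOf.perm _ _), wordEquiv_coe w,
    pairProd_ofFn, ← filter_filter,
    prod_filter (fun p : Fin #J × Fin #J => w'.symm (w p.2) < w'.symm (w p.1))]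
  simp only [idxOf_wordEquiv, Fin.val_fin_lt]

lemma det_inversionMatrix_of_mem_nonZeroDivisors (J : Finset α)
    (hX : ∀ K ⊆ J, 2 ≤ #K → 1 - offDiagProd q K ∈ nonZeroDivisors R) :
    (inversionMatrix q J).det = ∏ K ∈ J.powerset with 2 ≤ #K,
      (1 - offDiagProd q K) ^ ((#K - 2).factorial * (#J - #K + 1).factorial) := by
  rw [inversionMatrix_eq_submatrix, Matrix.det_submatrix_equiv_self, det_symmetrizer q J hX]

theorem det_MJ_general (J : Finset α) :
    (inversionMatrix q J).det = ∏ K ∈ J.powerset with 2 ≤ #K,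
      (1 - offDiagProd q K) ^ ((#K - 2).factorial * (#J - #K + 1).factorial) := by
  let φ : MvPolynomial (α × α) ℤ →+* R :=
    MvPolynomial.eval₂Hom (Int.castRingHom R) fun p => q p.1 p.2
  have hgeneric := congrArg φ <| det_inversionMatrix_of_mem_nonZeroDivisors
    (fun a b => (MvPolynomial.X (a, b) : MvPolynomial (α × α) ℤ)) J fun K _ hK =>
      mem_nonZeroDivisors_of_ne_zero (one_sub_offDiagProd_X_ne_zero hK)
  rw [RingHom.map_det] at hgeneric
  convert hgeneric using 2
  · ext w w'
    simp [φ, inversionMatrix]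
  · simp [φ, offDiagProd]

end Entries

theorem det_MJ (J : Finset ℕ+) (hn : 2 ≤ J.card) :
    Matrix.det (Matrix.of
        fun w w' : Fin J.card ≃ {x : ℕ+ // x ∈ J} =>
          ∏ p ∈ Finset.univ.filter
              (fun p : Fin J.card × Fin J.card =>
                p.1 < p.2 ∧ w'.symm (w p.2) < w'.symm (w p.1)),
            qJ J (w p.1 : ℕ+) (w p.2 : ℕ+)) =
      ∏ K ∈ J.powerset.filter (fun K => 2 ≤ K.card),
        (1 - ∏ p ∈ (K ×ˢ K).filter (fun p : ℕ+ × ℕ+ => p.1 < p.2),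
              qJ J p.1 p.2 * qJ J p.2 p.1)
          ^ ((K.card - 2).factorial * (J.card - K.card + 1).factorial) := by
  simp only [← offDiagProd_eq_prod_lt]
  convert det_MJ_general (qJ J) J
  rfl
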